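/- arXiv:2510.27290 — 3 statements merged into one kernel-verified Lean document; each statement's English description precedes it below -/
import Mathlib

section
/- Let n > 1 and let S = {±a_1,…,±a_n} where 0 < a_1 < … < a_n and gcd(a_1,…,a_n) = 1. Then χ(a_1,…,a_n) ≤ ⌊3n/2⌋ + 1, i.e., there exists a Borel proper (⌊3n/2⌋+1)-coloring of the Schreier graph G_S on F(2^ℤ). -/
/-- The shift action of `ℤ` on `α^ℤ`: `(s · x)(n) = x(n + s)`. -/
def shift {α : Type*} (s : ℤ) (x : ℤ → α) : ℤ → α := fun n => x (n + s)

/-- The free part `F(2^ℤ)` of the shift action on `2^ℤ = (ℤ → Bool)`. -/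
def FreePart : Set (ℤ → Bool) := {x | ∀ s : ℤ, s ≠ 0 → shift s x ≠ x}

/-- `c` is a Borel proper coloring of the Schreier graph `G_S` on `F(2^ℤ)`,
where `S = {±a : a ∈ A}`: `c` is Borel and `c(x) ≠ c(s · x)` for all `x` and `s ∈ S`. -/
def IsBorelColoring (A : Finset ℕ) {k : ℕ}
    (c : {x : ℤ → Bool // x ∈ FreePart} → Fin k) : Prop :=
  Measurable c ∧
    ∀ (x : {x : ℤ → Bool // x ∈ FreePart}) (a : ℕ), a ∈ A →
      ∀ (h : shift (a : ℤ) x.1 ∈ FreePart), c x ≠ c ⟨shift (a : ℤ) x.1, h⟩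

/-- The Borel chromatic number `χ(a₁, …, aₙ)` of the Schreier graph `G_S` on `F(2^ℤ)`,
where `S = {±a : a ∈ A}`: the least `k` admitting a Borel proper `k`-coloring. -/
noncomputable def borelChromatic (A : Finset ℕ) : ℕ :=
  sInf {k : ℕ | ∃ c : {x : ℤ → Bool // x ∈ FreePart} → Fin k, IsBorelColoring A c}


namespace BC

/-! ### Combinatorial part -/

/-- minimal excluded natural number of a finite set -/
noncomputable def mex (s : Finset ℕ) : ℕ := sInf {k | k ∉ s}

lemma mex_notMem (s : Finset ℕ) : mex s ∉ s :=
  Nat.sInf_mem (s := {k | k ∉ s}) (Infinite.exists_notMem_finset s)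

lemma mem_of_lt_mex {s : Finset ℕ} {k : ℕ} (h : k < mex s) : k ∈ s := by
  by_contra hk
  exact Nat.notMem_of_lt_sInf h hk

lemma mex_le_card (s : Finset ℕ) : mex s ≤ s.card := by
  have : Finset.range (mex s) ⊆ s := fun k hk => mem_of_lt_mex (Finset.mem_range.1 hk)
  simpa using Finset.card_le_card this

/-- The first-fit coloring of `ℕ`. -/
noncomputable def g (A : Finset ℕ) (z : ℕ) : ℕ :=
  mex (A.attach.biUnion fun a =>
    if _h : 0 < a.1 ∧ a.1 ≤ z then {g A (z - a.1)} else ∅)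
termination_by z
decreasing_by omega

lemma g_le (A : Finset ℕ) (z : ℕ) : g A z ≤ A.card := by
  rw [g]
  refine (mex_le_card _).trans ?_
  refine (Finset.card_biUnion_le_card_mul _ _ 1 ?_).trans (by simp)
  intro a _
  split_ifs <;> simp

lemma g_proper {A : Finset ℕ} {a z : ℕ} (ha : a ∈ A) (h0 : 0 < a) (hz : a ≤ z) :
    g A z ≠ g A (z - a) := by
  intro h
  rw [g] at h
  refine mex_notMem _ (Eq.mpr (congrArg (· ∈ _) h) ?_)
  rw [Finset.mem_biUnion]
  exact ⟨⟨a, ha⟩, Finset.mem_attach _ _, by simp [h0, hz]⟩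

lemma g_fit {A : Finset ℕ} {z i : ℕ} (h : i < g A z) :
    ∃ a ∈ A, a ≤ z ∧ g A (z - a) = i := by
  rw [g] at h
  have := mem_of_lt_mex h
  rw [Finset.mem_biUnion] at this
  obtain ⟨a, -, ha⟩ := this
  split_ifs at ha with h1
  · exact ⟨a.1, a.2, h1.2, (Finset.mem_singleton.1 ha).symm⟩
  · simp at ha

/-- The terminal coloring. -/
noncomputable def H (A : Finset ℕ) (z : ℕ) : ℕ :=
  if g A z = 0 then 0 else A.card + 1 - g A z

lemma H_le (A : Finset ℕ) (z : ℕ) : H A z ≤ A.card := by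
  unfold H; split_ifs <;> omega

/-- The transition coloring, `l` = length of the previous interval. -/
noncomputable def C (A : Finset ℕ) (W l : ℕ) (z : ℕ) : ℕ :=
  if (A.card + 1) * W ≤ z then H A z
  else if g A z * W ≤ z then A.card + 1 - g A z
  else mex (A.attach.image fun a =>
    if _h : 0 < a.1 ∧ a.1 ≤ z then C A W l (z - a.1) else H A (l + z - a.1))
termination_by z
decreasing_by omega

/-- colour of the `a`-predecessor -/
noncomputable def Cp (A : Finset ℕ) (W l z a : ℕ) : ℕ :=
  if a ≤ z then C A W l (z - a) else H A (l + z - a)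

variable {A : Finset ℕ} {W D l : ℕ}

lemma C_late {z : ℕ} (h : (A.card + 1) * W ≤ z) : C A W l z = H A z := by
  rw [C, if_pos h]

lemma C_fixed {z : ℕ} (h : ¬ (A.card + 1) * W ≤ z) (h2 : g A z * W ≤ z) :
    C A W l z = A.card + 1 - g A z := by
  rw [C, if_neg h, if_pos h2]

lemma not_late {z : ℕ} (h2 : ¬ g A z * W ≤ z) : ¬ (A.card + 1) * W ≤ z := by
  intro h
  have := Nat.mul_le_mul_right W ((g_le A z).trans (Nat.le_succ _))
  exact h2 (this.trans h)

lemma C_mex (hpos : ∀ a ∈ A, 0 < a) {z : ℕ} (h2 : ¬ g A z * W ≤ z) :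
    C A W l z = mex (A.image (Cp A W l z)) := by
  rw [C, if_neg (not_late h2), if_neg h2]
  congr 1
  ext k
  simp only [Finset.mem_image, Finset.mem_attach, true_and, Subtype.exists, Cp]
  constructor
  · rintro ⟨a, ha, h⟩
    refine ⟨a, ha, ?_⟩
    simpa [hpos a ha] using h
  · rintro ⟨a, ha, h⟩
    refine ⟨a, ha, ?_⟩
    simpa [hpos a ha] using h

lemma C_le (hpos : ∀ a ∈ A, 0 < a) (z : ℕ) : C A W l z ≤ A.card + 1 := by
  by_cases h : (A.card + 1) * W ≤ z
  · rw [C_late h]; exact (H_le A z).trans (Nat.le_succ _)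
  by_cases h2 : g A z * W ≤ z
  · rw [C_fixed h h2]; omega
  · rw [C_mex hpos h2]
    exact ((mex_le_card _).trans Finset.card_image_le).trans (Nat.le_succ _)

lemma C_mex_le (hpos : ∀ a ∈ A, 0 < a) {z : ℕ} (h2 : ¬ g A z * W ≤ z) :
    C A W l z ≤ A.card := by
  rw [C_mex hpos h2]
  exact (mex_le_card _).trans Finset.card_image_le

lemma C_mex_lt (hpos : ∀ a ∈ A, 0 < a) (hD : ∀ a ∈ A, a ≤ D) {z j : ℕ}
    (h2 : ¬ g A z * W ≤ z) (hj : j * W + D ≤ z) : C A W l z + j < A.card := by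
  by_contra hc
  push Not at hc
  have hjg : j < g A z := by
    by_contra hh
    push Not at hh
    have := Nat.mul_le_mul_right W hh
    omega
  have hgn := g_le A z
  have hlate := not_late h2
  have hsub : Finset.range (A.card - j) ∪ Finset.Icc (A.card + 1 - j) (A.card + 1) ⊆
      A.image (Cp A W l z) := by
    intro k hk
    rw [Finset.mem_union] at hk
    rcases hk with hk | hk
    · rw [Finset.mem_range] at hk
      refine mem_of_lt_mex ?_
      rw [← C_mex hpos h2]
      omega
    · rw [Finset.mem_Icc] at hk
      obtain ⟨a, ha, haz, hga⟩ := g_fit (A := A) (z := z) (i := A.card + 1 - k) (by omega)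
      refine Finset.mem_image.2 ⟨a, ha, ?_⟩
      have haD := hD a ha
      rw [Cp, if_pos haz, C_fixed (by omega), hga]
      · omega
      · rw [hga]
        have : (A.card + 1 - k) * W ≤ j * W := Nat.mul_le_mul_right W (by omega)
        omega
  have h3 := (Finset.card_le_card hsub).trans Finset.card_image_le
  rw [Finset.card_union_of_disjoint, Finset.card_range, Nat.card_Icc] at h3
  · omega
  · rw [Finset.disjoint_left]
    intro k hk hk2
    rw [Finset.mem_range] at hk
    rw [Finset.mem_Icc] at hk2
    omega

lemma C_proper (hpos : ∀ a ∈ A, 0 < a) (hD : ∀ a ∈ A, a ≤ D) (hW : W = 2 * D)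
    {z a : ℕ} (ha : a ∈ A) : C A W l z ≠ Cp A W l z a := by
  have haD := hD a ha
  have ha0 := hpos a ha
  have hexp : (A.card + 1) * W = A.card * W + W := by ring
  by_cases h2 : g A z * W ≤ z
  swap
  · intro h
    rw [C_mex hpos h2] at h
    have h7 := Finset.mem_image_of_mem (Cp A W l z) ha
    rw [← h] at h7
    exact mex_notMem _ h7
  have hgn := g_le A z
  by_cases hlate : (A.card + 1) * W ≤ z
  · have haz : a ≤ z := by omega
    have hgn' := g_le A (z - a)
    have hgp := g_proper ha ha0 haz
    have h4 := Nat.mul_le_mul_right W hgn'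
    rw [C_late hlate, Cp, if_pos haz]
    by_cases hl2 : (A.card + 1) * W ≤ z - a
    · rw [C_late hl2]
      unfold H
      split_ifs <;> omega
    · rw [C_fixed hl2 (by omega)]
      unfold H
      by_cases h0 : g A (z - a) = 0
      · rw [if_neg (by omega)]; omega
      · split_ifs <;> omega
  · rw [C_fixed hlate h2, Cp]
    split_ifs with haz
    · have hgp := g_proper ha ha0 haz
      have hgn' := g_le A (z - a)
      by_cases h5 : g A (z - a) * W ≤ z - a
      · rw [C_fixed (by omega) h5]; omega
      · rcases hg : g A z with _ | i
        · have := C_mex_le (l := l) hpos h5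
          omega
        · have h6 : (i + 1) * W = i * W + W := by ring
          rw [hg] at h2
          have := C_mex_lt (l := l) (j := i) hpos hD h5 (by omega)
          omega
    · have := H_le A (l + z - a)
      rcases hg : g A z with _ | i
      · omega
      · have h6 : (i + 1) * W = i * W + W := by ring
        rw [hg] at h2
        omega

/-! ### Borel part -/

/-- the free part as a type -/
abbrev X := {x : ℤ → Bool // x ∈ FreePart}

lemma shift_shift (s t : ℤ) (x : ℤ → Bool) : shift s (shift t x) = shift (s + t) x := by
  funext n; simp only [shift]; congr 1; ring

lemma shift_zero (x : ℤ → Bool) : shift 0 x = x := by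
  funext n; simp [shift]

lemma shift_mem (t : ℤ) {x : ℤ → Bool} (hx : x ∈ FreePart) : shift t x ∈ FreePart := by
  intro s hs h
  refine hx s hs ?_
  have := congrArg (shift (-t)) h
  rw [shift_shift, shift_shift, shift_shift] at this
  simpa [shift_zero] using this

/-- the shift on the free part -/
def T (s : ℤ) (x : X) : X := ⟨shift s x.1, shift_mem s x.2⟩

lemma T_T (s t : ℤ) (x : X) : T s (T t x) = T (s + t) x := Subtype.ext (shift_shift s t x.1)

lemma T_zero (x : X) : T 0 x = x := Subtype.ext (shift_zero x.1)

lemma measurable_coord (i : ℤ) : Measurable (fun x : X => x.1 i) :=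
  (measurable_pi_apply i).comp measurable_subtype_coe

lemma measurable_T (s : ℤ) : Measurable (T s) := by
  refine Measurable.subtype_mk ?_
  exact measurable_pi_lambda _ fun n => measurable_coord (n + s)

/-- basic sets, disjoint from their translates by at most `L` -/
def B (L : ℤ) (p : Finset ℤ × Finset ℤ) : Set X :=
  {x | (∀ i ∈ p.1, (x.1 i = true ↔ i ∈ p.2)) ∧
    ∀ s ∈ Finset.Icc (-L) L, s ≠ 0 → ∃ i ∈ p.1, x.1 (i + s) ≠ x.1 i}

lemma measurableSet_B (L : ℤ) (p : Finset ℤ × Finset ℤ) : MeasurableSet (B L p) := by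
  have hc : ∀ i, Measurable (fun x : X => x.1 i) := measurable_coord
  refine MeasurableSet.inter ?_ ?_
  · have : {x : X | ∀ i ∈ p.1, (x.1 i = true ↔ i ∈ p.2)} =
        ⋂ i ∈ p.1, {x : X | (x.1 i = true ↔ i ∈ p.2)} := by ext; simp
    change MeasurableSet {x : X | ∀ i ∈ p.1, (x.1 i = true ↔ i ∈ p.2)}
    rw [this]
    refine Finset.measurableSet_biInter _ fun i _ => ?_
    exact (hc i) (MeasurableSet.of_discrete (s := {b | b = true ↔ i ∈ p.2}))
  · have : {x : X | ∀ s ∈ Finset.Icc (-L) L, s ≠ 0 → ∃ i ∈ p.1, x.1 (i + s) ≠ x.1 i} =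
        ⋂ s ∈ Finset.Icc (-L) L, {x : X | s ≠ 0 → ∃ i ∈ p.1, x.1 (i + s) ≠ x.1 i} := by
      ext; simp
    change MeasurableSet
      {x : X | ∀ s ∈ Finset.Icc (-L) L, s ≠ 0 → ∃ i ∈ p.1, x.1 (i + s) ≠ x.1 i}
    rw [this]
    refine Finset.measurableSet_biInter _ fun s _ => ?_
    by_cases hs : s = 0
    · simp [hs]
    have : {x : X | s ≠ 0 → ∃ i ∈ p.1, x.1 (i + s) ≠ x.1 i} =
        ⋃ i ∈ p.1, {x : X | x.1 (i + s) = x.1 i}ᶜ := by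
      ext; simp [hs]
    rw [this]
    refine Finset.measurableSet_biUnion _ fun i _ => ?_
    exact (measurableSet_eq_fun (hc _) (hc _)).compl

lemma B_indep {L : ℤ} {p : Finset ℤ × Finset ℤ} {x : X} {s : ℤ} (hs : s ∈ Finset.Icc (-L) L)
    (h0 : s ≠ 0) (hx : x ∈ B L p) : T s x ∉ B L p := by
  intro h
  obtain ⟨i, hi, hne⟩ := hx.2 s hs h0
  have h1 := hx.1 i hi
  have h2 : (x.1 (i + s) = true ↔ i ∈ p.2) := h.1 i hi
  exact hne (Bool.eq_iff_iff.2 (h2.trans h1.symm))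

lemma exists_B (L : ℤ) (x : X) : ∃ p, x ∈ B L p := by
  have h : ∀ s : ℤ, ∃ i : ℤ, s ≠ 0 → x.1 (i + s) ≠ x.1 i := by
    intro s
    by_cases hs : s = 0
    · exact ⟨0, fun h => (h hs).elim⟩
    · obtain ⟨i, hi⟩ := Function.ne_iff.1 (x.2 s hs)
      exact ⟨i, fun _ => hi⟩
  choose f hf using h
  refine ⟨((Finset.Icc (-L) L).image f,
    ((Finset.Icc (-L) L).image f).filter fun i => x.1 i = true), ?_, ?_⟩
  · intro i hi
    simp only [Finset.mem_filter]
    exact ⟨fun h => ⟨hi, h⟩, fun h => h.2⟩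
  · intro s hs h0
    exact ⟨f s, Finset.mem_image_of_mem _ hs, hf s h0⟩

/-- greedy construction of a maximal independent set -/
def U (L : ℤ) (e : ℕ → Finset ℤ × Finset ℤ) : ℕ → Set X
  | 0 => ∅
  | k + 1 => U L e k ∪ {x | x ∈ B L (e k) ∧ ∀ s ∈ Finset.Icc (-L) L, T s x ∉ U L e k}

lemma measurableSet_U (L : ℤ) (e) (k : ℕ) : MeasurableSet (U L e k) := by
  induction k with
  | zero => exact MeasurableSet.empty
  | succ k ih =>
    refine ih.union ((measurableSet_B L _).inter ?_)
    have : {x : X | ∀ s ∈ Finset.Icc (-L) L, T s x ∉ U L e k} =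
        ⋂ s ∈ Finset.Icc (-L) L, T s ⁻¹' (U L e k)ᶜ := by ext; simp
    change MeasurableSet {x : X | ∀ s ∈ Finset.Icc (-L) L, T s x ∉ U L e k}
    rw [this]
    exact Finset.measurableSet_biInter _ fun s _ => measurable_T s ih.compl

lemma U_mono (L : ℤ) (e) : Monotone (U L e) :=
  monotone_nat_of_le_succ fun _ => Set.subset_union_left

lemma U_stage {L : ℤ} {e} {x : X} (h : ∃ k, x ∈ U L e k) :
    ∃ k, x ∈ U L e (k + 1) ∧ x ∈ B L (e k) ∧ ∀ s ∈ Finset.Icc (-L) L, T s x ∉ U L e k := by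
  obtain ⟨k, hk⟩ := h
  induction k with
  | zero => exact hk.elim
  | succ k ih =>
    rcases hk with hk | hk
    · exact ih hk
    · exact ⟨k, Or.inr hk, hk⟩

theorem exists_markers (L : ℕ) : ∃ M : Set X, MeasurableSet M ∧
    (∀ x ∈ M, ∀ s : ℤ, 0 < s → s ≤ L → T s x ∉ M) ∧
    (∀ x, ∃ d : ℕ, T (-(d : ℤ)) x ∈ M) := by
  obtain ⟨e, he⟩ := exists_surjective_nat (Finset ℤ × Finset ℤ)
  refine ⟨⋃ k, U L e k, MeasurableSet.iUnion fun k => measurableSet_U L e k, ?_, ?_⟩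
  · intro x hx s hs hsL hy
    rw [Set.mem_iUnion] at hx hy
    obtain ⟨k, hk, hkB, hkU⟩ := U_stage hx
    obtain ⟨m, hm, hmB, hmU⟩ := U_stage hy
    rcases lt_trichotomy k m with h | h | h
    · refine hmU (-s) (Finset.mem_Icc.2 ⟨by omega, by omega⟩) ?_
      rw [T_T, neg_add_cancel, T_zero]
      exact U_mono _ _ (Nat.succ_le_of_lt h) hk
    · subst h
      exact B_indep (Finset.mem_Icc.2 ⟨by omega, by omega⟩) hs.ne' hkB hmB
    · exact hkU s (Finset.mem_Icc.2 ⟨by omega, by omega⟩)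
        (U_mono _ _ (Nat.succ_le_of_lt h) hm)
  · have key : ∀ x : X, ∃ s ∈ Finset.Icc (-(L : ℤ)) L, T s x ∈ ⋃ k, U L e k := by
      intro x
      obtain ⟨p, hp⟩ := exists_B L x
      obtain ⟨k, rfl⟩ := he p
      by_cases h : ∀ s ∈ Finset.Icc (-(L : ℤ)) L, T s x ∉ U L e k
      · refine ⟨0, Finset.mem_Icc.2 ⟨by omega, by omega⟩, ?_⟩
        rw [T_zero]
        exact Set.mem_iUnion.2 ⟨k + 1, Or.inr ⟨hp, h⟩⟩
      · push Not at h
        obtain ⟨s, hs, h⟩ := h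
        exact ⟨s, hs, Set.mem_iUnion.2 ⟨k, h⟩⟩
    intro x
    obtain ⟨s, hs, h⟩ := key (T (-(L : ℤ)) x)
    rw [Finset.mem_Icc] at hs
    refine ⟨(L - s).toNat, ?_⟩
    rw [T_T] at h
    convert h using 2
    omega

open Classical in
theorem main (A : Finset ℕ) (hpos : ∀ a ∈ A, 0 < a) :
    ∃ c : X → ℕ, Measurable c ∧ (∀ x, c x ≤ A.card + 1) ∧
      ∀ x, ∀ a ∈ A, c (T a x) ≠ c x := by
  set D := A.sup id with hDdef
  have hD : ∀ a ∈ A, a ≤ D := fun a ha => Finset.le_sup (f := id) ha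
  set W := 2 * D with hW
  set L := (A.card + 1) * W + D with hL
  obtain ⟨M, hM, hind, hex⟩ := exists_markers L
  obtain ⟨d, hdM, hdmin, hdmeas⟩ : ∃ d : X → ℕ, (∀ x, T (-(d x : ℤ)) x ∈ M) ∧
      (∀ x (m : ℕ), m < d x → T (-(m : ℤ)) x ∉ M) ∧ Measurable d :=
    ⟨fun x => Nat.find (hex x), fun x => Nat.find_spec (hex x),
      fun x m h => Nat.find_min (hex x) h, measurable_find hex fun k => measurable_T _ hM⟩
  -- characterization of `d`
  have hdeq : ∀ x (m : ℕ), T (-(m : ℤ)) x ∈ M → (∀ i : ℕ, i < m → T (-(i : ℤ)) x ∉ M) →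
      d x = m := by
    intro x m h1 h2
    refine le_antisymm ?_ ?_
    · by_contra hh
      exact hdmin x m (not_le.1 hh) h1
    · by_contra hh
      exact h2 _ (not_le.1 hh) (hdM x)
  obtain ⟨l, hl⟩ : ∃ l : X → ℕ, ∀ x, l x = d (T (-((d x : ℤ) + 1)) x) + 1 := ⟨_, fun _ => rfl⟩
  have hlmeas : Measurable l := by
    have h1 : Measurable (fun p : X × ℕ => d (T (-((p.2 : ℤ) + 1)) p.1) + 1) := by
      refine measurable_from_prod_countable_left fun k => ?_
      exact (measurable_from_top (f := fun n : ℕ => n + 1)).comp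
        (hdmeas.comp (measurable_T (-((k : ℤ) + 1))))
    have h2 := h1.comp (measurable_id.prodMk hdmeas)
    rwa [show l = _ from funext hl]
  have hlM : ∀ x, T (-((d x : ℤ) + l x)) x ∈ M := by
    intro x
    have := hdM (T (-((d x : ℤ) + 1)) x)
    rw [T_T] at this
    convert this using 2
    rw [hl x]; push_cast; ring
  have hlmin : ∀ x (m : ℕ), d x < m → m < d x + l x → T (-(m : ℤ)) x ∉ M := by
    intro x m h1 h2
    have := hdmin (T (-((d x : ℤ) + 1)) x) (m - d x - 1) (by rw [hl x] at h2; omega)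
    rw [T_T] at this
    convert this using 3
    omega
  have hlL : ∀ x, L < l x := by
    intro x
    by_contra h
    push Not at h
    have h0 : 0 < l x := by rw [hl x]; exact Nat.succ_pos _
    refine hind _ (hlM x) (l x) (by omega) (by omega) ?_
    rw [T_T]
    convert hdM x using 2
    ring
  refine ⟨fun x => C A W (l x) (d x), ?_, fun x => C_le hpos _, ?_⟩
  · have h1 : Measurable (fun p : ℕ × ℕ => C A W p.1 p.2) := Measurable.of_discrete
    exact h1.comp (hlmeas.prodMk hdmeas)
  intro x a ha
  have haD := hD a ha
  have ha0 := hpos a ha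
  have hne := C_proper (l := l (T a x)) hpos hD hW (z := d (T a x)) ha
  have hM1 := hdM (T a x)
  have hmin1 := hdmin (T a x)
  have hM2 := hlM (T a x)
  have hmin2 := hlmin (T a x)
  have hL1 := hlL (T a x)
  simp only [T_T] at hM1 hmin1 hM2 hmin2
  rw [Cp] at hne
  split_ifs at hne with hcase
  · have hdx : d x = d (T a x) - a := by
      refine hdeq x _ ?_ ?_
      · convert hM1 using 2
        omega
      · intro i hi
        convert hmin1 (i + a) (by omega) using 3
        push_cast; ring
    have hlx : l x = l (T a x) := by
      rw [hl x, hl (T a x), T_T, hdx]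
      congr 3
      omega
    show C A W (l (T a x)) (d (T a x)) ≠ C A W (l x) (d x)
    rw [hlx, hdx]
    exact hne
  · have hdx : d x = l (T a x) + d (T a x) - a := by
      refine hdeq x _ ?_ ?_
      · convert hM2 using 2
        omega
      · intro i hi
        convert hmin2 (i + a) (by omega) (by omega) using 3
        push_cast; ring
    show C A W (l (T a x)) (d (T a x)) ≠ C A W (l x) (d x)
    rw [hdx, C_late (l := l x) (by omega)]
    exact hne

end BC

/-- For `n > 1`, `χ(a₁,…,aₙ) ≤ ⌊3n/2⌋ + 1`: there is a Borel proper
`(⌊3n/2⌋+1)`-coloring of `G_S` on `F(2^ℤ)`. -/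
theorem borelChromatic_le_three_halves
    (A : Finset ℕ) (hpos : ∀ a ∈ A, 0 < a) (hgcd : A.gcd id = 1) (hn : 1 < A.card) :
    (∃ c : {x : ℤ → Bool // x ∈ FreePart} → Fin (3 * A.card / 2 + 1),
        IsBorelColoring A c) ∧
    borelChromatic A ≤ 3 * A.card / 2 + 1 := by
  have h1 : ∃ c : {x : ℤ → Bool // x ∈ FreePart} → Fin (3 * A.card / 2 + 1),
      IsBorelColoring A c := by
    obtain ⟨c, hc, hle, hne⟩ := BC.main A hpos
    refine ⟨fun x => ⟨c x, by have := hle x; omega⟩, ?_, ?_⟩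
    · refine measurable_to_countable' fun k => ?_
      have h2 := hc (MeasurableSet.singleton k.1)
      convert h2 using 1
      ext x
      simp [Fin.ext_iff]
    · intro x a ha h heq
      exact hne x a ha (congrArg Fin.val heq).symm
  exact ⟨h1, Nat.sInf_le h1⟩
end

section
/- For all integers n ≥ 1 and 3 ≤ k ≤ n + 2, there exist integers 0 < a_1 < … < a_n with gcd(a_1,…,a_n) = 1 such that χ(a_1,…,a_n) = k. -/
/-- One elementary transition: colour of residue class `r` at stage `v`. -/
def transCol (q v r : ℤ) : ℤ :=
  if r = 0 then (if v = 0 then 0 else if v ≤ q then q else q - 1)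
  else if r < v then r - 1 else r

/-- Colour at stage `s` of the position `r`. -/
def stageCol (q s r : ℤ) : ℤ := transCol q (s % (q + 1)) ((r - s / (q + 1)) % q)

lemma trans_range {q v r : ℤ} (hq : 2 ≤ q) (h0 : 0 ≤ r) (h1 : r < q) :
    0 ≤ transCol q v r ∧ transCol q v r ≤ q := by
  unfold transCol; split_ifs <;> omega

lemma stageCol_range {q : ℤ} (hq : 2 ≤ q) (s r : ℤ) :
    0 ≤ stageCol q s r ∧ stageCol q s r ≤ q :=
  trans_range hq (Int.emod_nonneg _ (by omega)) (Int.emod_lt_of_pos _ (by omega))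

lemma trans_ne {q v v' r r' : ℤ} (hq : 2 ≤ q) (h0 : 0 ≤ r) (h1 : r < q)
    (h0' : 0 ≤ r') (h1' : r' < q) (hv : 0 ≤ v) (hv' : v' ≤ q + 1) (hvv : v' = v ∨ v' = v + 1)
    (hr : r ≠ r') : transCol q v r ≠ transCol q v' r' := by
  unfold transCol; split_ifs <;> omega

lemma trans_top {q r : ℤ} (hq : 2 ≤ q) (h0 : 0 ≤ r) (h1 : r < q) :
    transCol q 0 ((r - 1) % q) = transCol q (q + 1) r := by
  by_cases h : r = 0
  · have : (r - 1) % q = q - 1 := by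
      rw [h, ← Int.add_emod_right, Int.emod_eq_of_lt] <;> omega
    rw [this]; unfold transCol; split_ifs <;> omega
  · rw [Int.emod_eq_of_lt (by omega) (by omega)]
    unfold transCol; split_ifs <;> omega

lemma emod_sub_ne {q r r' u : ℤ} (hr : ¬ q ∣ r - r') : (r - u) % q ≠ (r' - u) % q := by
  intro h
  apply hr
  have h2 := Int.ModEq.dvd (show r' - u ≡ r - u [ZMOD q] from h.symm)
  simpa using h2

lemma stageCol_ne {q s s' r r' : ℤ} (hq : 2 ≤ q) (hs : s' = s ∨ s' = s + 1)
    (hr : ¬ q ∣ r - r') : stageCol q s r ≠ stageCol q s' r' := by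
  have p1 : 0 < q := by omega
  have p2 : 0 < q + 1 := by omega
  have e0 := Int.emod_nonneg s p2.ne'
  have e1 := Int.emod_lt_of_pos s p2
  have key : ∀ v', v' ≤ q + 1 → (v' = s % (q+1) ∨ v' = s % (q+1) + 1) →
      stageCol q s r ≠ transCol q v' ((r' - s / (q + 1)) % q) := fun v' h h' =>
    trans_ne hq (Int.emod_nonneg _ p1.ne') (Int.emod_lt_of_pos _ p1) (Int.emod_nonneg _ p1.ne')
      (Int.emod_lt_of_pos _ p1) e0 h h' (emod_sub_ne hr)
  rcases hs with rfl | rfl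
  · exact key _ (by omega) (Or.inl rfl)
  · have hdm := Int.mul_ediv_add_emod s (q + 1)
    by_cases h : s % (q + 1) = q
    · have hs1 : s + 1 = (q + 1) * (s / (q + 1) + 1) := by linear_combination h - hdm
      have h3 : stageCol q (s + 1) r' = transCol q (q + 1) ((r' - s / (q + 1)) % q) := by
        rw [← trans_top hq (Int.emod_nonneg _ p1.ne') (Int.emod_lt_of_pos _ p1)]
        unfold stageCol
        have a1 : (s + 1) % (q + 1) = 0 := by rw [hs1]; exact Int.mul_emod_right _ _
        have a2 : (s + 1) / (q + 1) = s / (q + 1) + 1 := by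
          conv_lhs => rw [hs1]
          exact Int.mul_ediv_cancel_left _ p2.ne'
        rw [a1, a2, Int.emod_sub_emod, ← sub_sub]
      rw [h3]; exact key _ le_rfl (Or.inr (by omega))
    · have hs1 : s + 1 = (s % (q + 1) + 1) + (q + 1) * (s / (q + 1)) := by
        linear_combination - hdm
      have a1 : (s + 1) % (q + 1) = s % (q + 1) + 1 := by
        conv_lhs => rw [hs1]
        rw [Int.add_mul_emod_self_left]
        exact Int.emod_eq_of_lt (by omega) (by omega)
      have a2 : (s + 1) / (q + 1) = s / (q + 1) := by
        conv_lhs => rw [hs1]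
        rw [Int.add_mul_ediv_left _ _ p2.ne', Int.ediv_eq_zero_of_lt (by omega) (by omega)]
        simp
      have : stageCol q (s+1) r' = transCol q (s % (q+1) + 1) ((r' - s / (q + 1)) % q) := by
        unfold stageCol; rw [a1, a2]
      rw [this]; exact key _ (by omega) (Or.inr rfl)

lemma stageCol_end {q t r : ℤ} (hq : 2 ≤ q) : stageCol q (t * (q + 1)) r = (r - t) % q := by
  unfold stageCol
  rw [Int.mul_emod_left, Int.mul_ediv_cancel _ (by omega)]
  have := Int.emod_nonneg (r - t) (b := q) (by omega)
  unfold transCol; split_ifs <;> omega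

/-- Colour of position `i` inside a gap of length `g`. -/
def gapCol (q D i g : ℤ) : ℤ := stageCol q (min (i / D) ((g % q) * (q + 1))) i

lemma gapCol_same {q D i a g : ℤ} (hq : 2 ≤ q) (ha : 0 ≤ a) (haD : a < D)
    (hqa : ¬ q ∣ a) : gapCol q D i g ≠ gapCol q D (i + a) g := by
  have hD : 0 < D := by omega
  apply stageCol_ne hq
  · have h1 : i / D ≤ (i + a) / D := Int.ediv_le_ediv hD (by omega)
    have h2 : (i + a) / D ≤ i / D + 1 := by
      have e : (i + D) / D = i / D + 1 := by
        rw [Int.add_ediv_of_dvd_right (dvd_refl D), Int.ediv_self hD.ne']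
      rw [← e]
      exact Int.ediv_le_ediv hD (by omega)
    omega
  · rw [sub_add_cancel_left, dvd_neg]; exact hqa

lemma gapCol_cross {q D i j a g' : ℤ} (hq : 2 ≤ q) (hj : 1 ≤ j) (hja : j ≤ a) (haD : a < D)
    (hqa : ¬ q ∣ a) (hg : D * (q * (q + 1) + 1) ≤ i + j) :
    gapCol q D i (i + j) ≠ gapCol q D (a - j) g' := by
  have hD : 0 < D := by omega
  have t0 := Int.emod_nonneg (i + j) (b := q) (by omega)
  have t1 := Int.emod_lt_of_pos (i + j) (b := q) (by omega)
  have t0' := Int.emod_nonneg g' (b := q) (by omega)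
  have h1 : min (i / D) (((i + j) % q) * (q + 1)) = ((i + j) % q) * (q + 1) := by
    apply min_eq_right
    rw [Int.le_ediv_iff_mul_le hD]
    have : (i + j) % q * (q + 1) ≤ q * (q + 1) := by nlinarith
    nlinarith
  have h2 : min ((a - j) / D) ((g' % q) * (q + 1)) = 0 * (q + 1) := by
    rw [Int.ediv_eq_zero_of_lt (by omega) (by omega), zero_mul]
    apply min_eq_left
    positivity
  unfold gapCol
  rw [h1, h2, stageCol_end hq, stageCol_end hq]
  intro h
  have h3 := Int.ModEq.dvd (show i - (i + j) % q ≡ a - j - 0 [ZMOD q] from h)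
  apply hqa
  have h4 : q ∣ (i + j) - (i + j) % q := Int.dvd_self_sub_emod
  have := dvd_add h3 h4
  have e : a - j - 0 - (i - (i + j) % q) + (i + j - (i + j) % q) = a := by ring
  rwa [e] at this

/-! ### Markers -/

lemma shift_shift {α : Type*} (s t : ℤ) (x : ℤ → α) : shift s (shift t x) = shift (s + t) x := by
  funext n; simp [shift, add_assoc]

lemma shift_zero' {α : Type*} (x : ℤ → α) : shift 0 x = x := by
  funext n; simp [shift]

lemma shift_mem_free {x : ℤ → Bool} (hx : x ∈ FreePart) (t : ℤ) : shift t x ∈ FreePart := by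
  intro s hs h
  apply hx s hs
  have := congrArg (shift (-t)) h
  rw [shift_shift, shift_shift, shift_shift] at this
  simpa [shift_zero'] using this

lemma measurable_shift (s : ℤ) : Measurable (shift s : (ℤ → Bool) → (ℤ → Bool)) :=
  measurable_pi_lambda _ fun n => measurable_pi_apply (n + s)

def cyl (E : Finset (ℤ × Bool)) : Set (ℤ → Bool) := {x | ∀ p ∈ E, x p.1 = p.2}

lemma measurable_cyl (E : Finset (ℤ × Bool)) : MeasurableSet (cyl E) := by
  have : cyl E = ⋂ p ∈ E, {x | x p.1 = p.2} := by ext; simp [cyl]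
  rw [this]
  refine Finset.measurableSet_biInter _ fun p _ => ?_
  exact (measurable_pi_apply (X := fun _ : ℤ => Bool) p.1) (measurableSet_singleton p.2)

/-- points of `B` none of whose shifts by at most `G` lies in `C` -/
def sep (G : ℤ) (B C : Set (ℤ → Bool)) : Set (ℤ → Bool) :=
  {x | x ∈ B ∧ ∀ s : ℤ, s ≠ 0 → |s| ≤ G → shift s x ∉ C}

lemma measurable_sep (G : ℤ) {B C : Set (ℤ → Bool)} (hB : MeasurableSet B)
    (hC : MeasurableSet C) : MeasurableSet (sep G B C) := by
  have : sep G B C = B ∩ ⋂ (s : ℤ) (_ : s ≠ 0) (_ : |s| ≤ G), (shift s ⁻¹' C)ᶜ := by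
    ext; simp [sep]
  rw [this]
  exact hB.inter <| .iInter fun s => .iInter fun _ => .iInter fun _ =>
    (measurable_shift s hC).compl

lemma exists_cyl {G : ℤ} {x : ℤ → Bool} (hx : x ∈ FreePart) :
    ∃ E, x ∈ sep G (cyl E) (cyl E) := by
  have h : ∀ s : ℤ, ∃ n : ℤ, s ≠ 0 → x (n + s) ≠ x n := by
    intro s
    by_cases hs : s = 0
    · exact ⟨0, fun h => absurd hs h⟩
    · have := hx s hs
      obtain ⟨n, hn⟩ := Function.ne_iff.1 this
      exact ⟨n, fun _ => hn⟩
  choose n hn using h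
  refine ⟨(Finset.Icc (-G) G).image fun s => (n s, x (n s)), ?_, ?_⟩
  · intro p hp
    obtain ⟨s, _, rfl⟩ := Finset.mem_image.1 hp
    rfl
  · intro s hs hsG h
    exact hn s hs (h (n s, x (n s)) (Finset.mem_image.2 ⟨s, Finset.mem_Icc.2 (abs_le.1 hsG), rfl⟩))

lemma exists_markers (G : ℤ) : ∃ M : Set (ℤ → Bool), MeasurableSet M ∧
    (∀ x ∈ M, ∀ s : ℤ, s ≠ 0 → |s| ≤ G → shift s x ∉ M) ∧
    (∀ x ∈ FreePart, 0 ≤ G → ∃ s : ℤ, |s| ≤ G ∧ shift s x ∈ M) := by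
  obtain ⟨e, he⟩ := exists_surjective_nat (Finset (ℤ × Bool))
  let U : ℕ → Set (ℤ → Bool) := fun n => sep G (cyl (e n)) (cyl (e n))
  let M : ℕ → Set (ℤ → Bool) := fun n => Nat.rec ∅ (fun n C => C ∪ sep G (U n) C) n
  have hM : ∀ n, M (n + 1) = M n ∪ sep G (U n) (M n) := fun n => rfl
  have mono : Monotone M := monotone_nat_of_le_succ fun n => by rw [hM]; exact Set.subset_union_left
  have ind : ∀ n, ∀ x ∈ M n, ∀ s : ℤ, s ≠ 0 → |s| ≤ G → shift s x ∉ M n := by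
    intro n
    induction n with
    | zero => intro x hx; exact absurd hx (Set.notMem_empty x)
    | succ n ih =>
      intro x hx s hs hsG hy
      rw [hM] at hx hy
      have hback : shift (-s) (shift s x) = x := by rw [shift_shift]; simp [shift_zero']
      rcases hx with hx | hx <;> rcases hy with hy | hy
      · exact ih x hx s hs hsG hy
      · refine hy.2 (-s) (by simpa using hs) (by simpa using hsG) ?_
        rw [hback]; exact hx
      · exact hx.2 s hs hsG hy
      · exact hx.1.2 s hs hsG hy.1.1
  refine ⟨⋃ n, M n, ?_, ?_, ?_⟩
  · refine .iUnion fun n => ?_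
    induction n with
    | zero => exact MeasurableSet.empty
    | succ n ih =>
      rw [hM]
      exact ih.union (measurable_sep G (measurable_sep G (measurable_cyl _) (measurable_cyl _)) ih)
  · intro x hx s hs hsG hy
    obtain ⟨i, hi⟩ := Set.mem_iUnion.1 hx
    obtain ⟨j, hj⟩ := Set.mem_iUnion.1 hy
    exact ind (max i j) x (mono (le_max_left _ _) hi) s hs hsG (mono (le_max_right _ _) hj)
  · intro x hx hG
    obtain ⟨E, hE⟩ := exists_cyl (G := G) hx
    obtain ⟨n, rfl⟩ := he E
    by_cases h : x ∈ sep G (U n) (M n)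
    · exact ⟨0, by simpa using hG, by
        rw [shift_zero']; exact Set.mem_iUnion.2 ⟨n + 1, Or.inr h⟩⟩
    · have : ¬ ∀ s : ℤ, s ≠ 0 → |s| ≤ G → shift s x ∉ M n := fun h' => h ⟨hE, h'⟩
      push Not at this
      obtain ⟨s, _, hs, hm⟩ := this
      exact ⟨s, hs, Set.mem_iUnion.2 ⟨n, hm⟩⟩

lemma exists_coloring (q : ℕ) (hq : 2 ≤ q) (A : Finset ℕ) (hA : ∀ a ∈ A, ¬ q ∣ a) :
    ∃ c : {x : ℤ → Bool // x ∈ FreePart} → Fin (q + 1), IsBorelColoring A c := by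
  classical
  obtain ⟨D, hD⟩ : ∃ D : ℕ, ∀ a ∈ A, a < D :=
    ⟨A.sup id + 1, fun a ha => Nat.lt_succ_of_le (Finset.le_sup (f := id) ha)⟩
  set G : ℤ := D * (q * (q + 1) + 1) with hGdef
  have hG0 : 0 ≤ G := by positivity
  have hGD : (D : ℤ) ≤ G := by
    have : (0:ℤ) ≤ D * (q * (q + 1)) := by positivity
    rw [hGdef]; linarith
  obtain ⟨M, hMm, hMs, hMx⟩ := exists_markers G
  have hb : ∀ x : {x : ℤ → Bool // x ∈ FreePart}, ∃ i : ℕ, shift (-(i : ℤ)) x.1 ∈ M := by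
    intro x
    obtain ⟨s, hs, hm⟩ := hMx _ (shift_mem_free x.2 (-G)) hG0
    rw [shift_shift] at hm
    rw [abs_le] at hs
    refine ⟨(G - s).toNat, ?_⟩
    rw [Int.toNat_of_nonneg (by omega)]
    convert hm using 2; ring
  have hf : ∀ x : {x : ℤ → Bool // x ∈ FreePart}, ∃ j : ℕ, shift ((j : ℤ) + 1) x.1 ∈ M := by
    intro x
    obtain ⟨s, hs, hm⟩ := hMx _ (shift_mem_free x.2 (G + 1)) hG0
    rw [shift_shift] at hm
    rw [abs_le] at hs
    refine ⟨(G + s).toNat, ?_⟩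
    rw [Int.toNat_of_nonneg (by omega)]
    convert hm using 2; ring
  let I : {x : ℤ → Bool // x ∈ FreePart} → ℕ := fun x => Nat.find (hb x)
  let J : {x : ℤ → Bool // x ∈ FreePart} → ℕ := fun x => Nat.find (hf x)
  have mI : Measurable I := measurable_find hb fun n =>
    ((measurable_shift _).comp measurable_subtype_coe) hMm
  have mJ : Measurable J := measurable_find hf fun n =>
    ((measurable_shift _).comp measurable_subtype_coe) hMm
  have hqz : (2 : ℤ) ≤ q := by exact_mod_cast hq
  let φ : ℕ × ℕ → Fin (q + 1) := fun p =>
    ⟨(gapCol q D p.1 (p.1 + (p.2 + 1))).toNat, by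
      have := stageCol_range hqz (min ((p.1 : ℤ) / D) (((p.1 + (p.2 + 1) : ℤ) % q) * (q + 1))) p.1
      unfold gapCol; omega⟩
  have hφ : ∀ p p' : ℕ × ℕ, gapCol q D p.1 (p.1 + (p.2 + 1)) ≠ gapCol q D p'.1 (p'.1 + (p'.2 + 1))
      → φ p ≠ φ p' := by
    intro p p' h h'
    have h1 := stageCol_range hqz (min ((p.1 : ℤ) / D) (((p.1 + (p.2 + 1) : ℤ) % q) * (q + 1))) p.1
    have h2 := stageCol_range hqz
      (min ((p'.1 : ℤ) / D) (((p'.1 + (p'.2 + 1) : ℤ) % q) * (q + 1))) p'.1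
    have h3 := congrArg Fin.val h'
    simp only [φ] at h3
    unfold gapCol at h h3
    omega
  refine ⟨fun x => φ (I x, J x), (measurable_of_countable φ).comp (mI.prodMk mJ), ?_⟩
  intro x a ha hy
  have hqa : ¬ (q : ℤ) ∣ a := by exact_mod_cast hA a ha
  have haD : (a : ℤ) < D := by exact_mod_cast hD a ha
  apply hφ
  set y : {x : ℤ → Bool // x ∈ FreePart} := ⟨shift (a : ℤ) x.1, hy⟩ with hydef
  have hIx : shift (-(I x : ℤ)) x.1 ∈ M := Nat.find_spec (hb x)
  have hJx : shift ((J x : ℤ) + 1) x.1 ∈ M := Nat.find_spec (hf x)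
  have no : ∀ l : ℤ, -(I x : ℤ) < l → l < (J x : ℤ) + 1 → shift l x.1 ∉ M := by
    intro l h1 h2 h3
    rcases le_or_gt l 0 with h | h
    · have := Nat.find_min (hb x) (m := (-l).toNat) (by change _ < I x; omega)
      apply this
      rw [Int.toNat_of_nonneg (by omega), neg_neg]; exact h3
    · have := Nat.find_min (hf x) (m := (l - 1).toNat) (by change _ < J x; omega)
      apply this
      rw [Int.toNat_of_nonneg (by omega), sub_add_cancel]; exact h3
  have gap : G < I x + (J x + 1) := by
    by_contra h
    refine hMs _ hIx (I x + (J x + 1)) (by omega) (abs_le.2 (by omega)) ?_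
    rw [shift_shift]
    convert hJx using 2; ring
  rcases lt_or_ge a (J x + 1) with h | h
  · have e1 : I y = I x + a := by
      refine (Nat.find_eq_iff (hb y)).2 ⟨?_, ?_⟩
      · change shift _ (shift _ _) ∈ M
        rw [shift_shift]; convert hIx using 2; push_cast; ring
      · intro n hn
        change shift _ (shift _ _) ∉ M
        rw [shift_shift]
        exact no _ (by omega) (by omega)
    have e2 : J y = J x - a := by
      refine (Nat.find_eq_iff (hf y)).2 ⟨?_, ?_⟩
      · change shift _ (shift _ _) ∈ M
        rw [shift_shift]; convert hJx using 2; omega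
      · intro n hn
        change shift _ (shift _ _) ∉ M
        rw [shift_shift]
        exact no _ (by omega) (by omega)
    have := gapCol_same (i := I x) (g := I x + (J x + 1)) hqz (Int.natCast_nonneg a) haD hqa
    simp only [e1, e2]
    convert this using 2
    all_goals omega
  · have e1 : I y = a - (J x + 1) := by
      refine (Nat.find_eq_iff (hb y)).2 ⟨?_, ?_⟩
      · change shift _ (shift _ _) ∈ M
        rw [shift_shift]; convert hJx using 2; omega
      · intro n hn
        change shift _ (shift _ _) ∉ M
        rw [shift_shift]
        have := hMs _ hJx (-(n:ℤ) + a - (J x + 1)) (by omega) (abs_le.2 (by omega))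
        rw [shift_shift] at this
        convert this using 3; ring
    have := gapCol_cross (i := I x) (j := J x + 1) (g' := I y + (J y + 1)) hqz (by omega)
      (by omega) haD hqa (by rw [← hGdef]; exact gap.le)
    simp only
    have e3 : (I y : ℤ) = a - (J x + 1) := by omega
    rw [← e3] at this
    exact this

/-! ### Lower bound -/

lemma open_cyl {U : Set (ℤ → Bool)} (hU : IsOpen U) {x : ℤ → Bool} (hx : x ∈ U) :
    ∃ B : ℕ, ∀ y : ℤ → Bool, (∀ n : ℤ, |n| ≤ B → y n = x n) → y ∈ U := by
  obtain ⟨I, u, hu, hsub⟩ := isOpen_pi_iff.1 hU x hx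
  refine ⟨I.sup Int.natAbs, fun y hy => hsub ?_⟩
  intro n hn
  rw [hy n]
  · exact (hu n hn).2
  · have := Finset.le_sup (f := Int.natAbs) hn
    rw [Int.abs_eq_natAbs]
    exact_mod_cast this

lemma continuous_shift (s : ℤ) : Continuous (shift s : (ℤ → Bool) → (ℤ → Bool)) :=
  continuous_pi fun n => continuous_apply (n + s)

lemma free_residual : FreePart ∈ residual (ℤ → Bool) := by
  have : FreePart = ⋂ (s : ℤ) (_ : s ≠ 0), {x : ℤ → Bool | shift s x ≠ x} := by
    ext; simp [FreePart]
  rw [this]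
  refine countable_iInter_mem.2 fun s => countable_iInter_mem.2 fun hs => ?_
  apply residual_of_dense_open
  · exact isOpen_ne_fun (continuous_shift s) continuous_id
  · rw [dense_iff_inter_open]
    rintro U hU ⟨x, hx⟩
    obtain ⟨B, hB⟩ := open_cyl hU hx
    refine ⟨Function.update x (B + 1) (!x (B + 1 + s)), hB _ ?_, ?_⟩
    · intro n hn
      apply Function.update_of_ne
      rintro rfl
      rw [abs_le] at hn
      omega
    · intro h
      have h1 := congrFun h (B + 1)
      unfold shift at h1
      rw [Function.update_of_ne (by omega), Function.update_self] at h1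
      simp at h1

lemma measurable_free : MeasurableSet FreePart := by
  have : FreePart = ⋂ (s : ℤ) (_ : s ≠ 0), {x : ℤ → Bool | shift s x ≠ x} := by
    ext; simp [FreePart]
  rw [this]
  exact .iInter fun s => .iInter fun _ =>
    (isOpen_ne_fun (continuous_shift s) continuous_id).measurableSet

lemma shift_residual (l : ℤ) {R : Set (ℤ → Bool)} (hR : R ∈ residual (ℤ → Bool)) :
    shift l ⁻¹' R ∈ residual (ℤ → Bool) := by
  refine tendsto_residual_of_isOpenMap (continuous_shift l) ?_ hR
  refine IsOpenMap.of_inverse (f' := shift (-l)) ?_ ?_ ?_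
  · exact continuous_shift (-l)
  · intro x; rw [shift_shift]; simp [shift_zero']
  · intro x; rw [shift_shift]; simp [shift_zero']

lemma no_periodic {k : ℕ} (q : ℕ) (hq : 0 < q) (c : {x : ℤ → Bool // x ∈ FreePart} → Fin k)
    (hc : Measurable c)
    (h1 : ∀ x h, c ⟨shift 1 x.1, h⟩ ≠ c x)
    (h2 : ∀ x h, c ⟨shift (q : ℤ) x.1, h⟩ = c x) : False := by
  let C : Fin k → Set (ℤ → Bool) := fun i => Subtype.val '' (c ⁻¹' {i})
  have mC : ∀ i, MeasurableSet (C i) := fun i =>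
    measurable_free.subtype_image (hc (measurableSet_singleton i))
  choose U hU hCU using fun i => (mC i).residualEq_isOpen
  have hR0 : {x | ∀ i, x ∈ C i ↔ x ∈ U i} ∈ residual (ℤ → Bool) := by
    have : {x | ∀ i, x ∈ C i ↔ x ∈ U i} = ⋂ i, {x | x ∈ C i ↔ x ∈ U i} := by ext; simp
    rw [this]
    refine countable_iInter_mem.2 fun i => ?_
    filter_upwards [hCU i] with x hx
    exact iff_of_eq hx
  have hR : FreePart ∩ ⋂ l : ℤ, shift l ⁻¹' {x | ∀ i, x ∈ C i ↔ x ∈ U i} ∈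
      residual (ℤ → Bool) :=
    Filter.inter_mem free_residual (countable_iInter_mem.2 fun l => shift_residual l hR0)
  have hd := dense_of_mem_residual hR
  obtain ⟨x, hxF, hx⟩ := hd.nonempty
  rw [Set.mem_iInter] at hx
  have hx0 := hx 0
  simp only [Set.mem_preimage, shift_zero', Set.mem_ofPred_eq] at hx0
  set i := c ⟨x, hxF⟩ with hi
  have hxU : x ∈ U i := (hx0 i).1 ⟨⟨x, hxF⟩, rfl, rfl⟩
  obtain ⟨B, hB⟩ := open_cyl (hU i) hxU
  set N : ℕ := 2 * B
  set T : ℤ := 1 + q * N with hT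
  have hTB : (2 * B : ℤ) + 1 ≤ T := by
    have : (1 : ℤ) ≤ q := by exact_mod_cast hq
    have : (N : ℤ) = 2 * B := by simp [N]
    nlinarith
  obtain ⟨z, ⟨hzU, hzU'⟩, hzF, hz⟩ := hd.inter_open_nonempty (U i ∩ shift T ⁻¹' U i)
    ((hU i).inter ((hU i).preimage (continuous_shift T))) (by
      refine ⟨fun n => if n ≤ B then x n else x (n - T), hB _ ?_, hB _ ?_⟩
      · intro n hn
        rw [abs_le] at hn
        simp [hn.2]
      · intro n hn
        rw [abs_le] at hn
        have : ¬ (n + T ≤ B) := by omega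
        simp [shift, this])
  rw [Set.mem_iInter] at hz
  have hz0 := hz 0
  simp only [Set.mem_preimage, shift_zero', Set.mem_ofPred_eq] at hz0
  have hzC := (hz0 i).2 hzU
  have hzC' := (hz T i).2 hzU'
  have step : ∀ M : ℕ, shift (q * M : ℤ) z ∈ C i := by
    intro M
    induction M with
    | zero => simpa [shift_zero'] using hzC
    | succ M ih =>
      obtain ⟨w, hw, hw'⟩ := ih
      refine ⟨⟨shift (q : ℤ) w.1, shift_mem_free w.2 _⟩, (h2 w _).trans hw, ?_⟩
      change shift _ w.1 = _
      rw [hw', shift_shift]; congr 1; push_cast; ring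
  obtain ⟨w, hw, hw'⟩ := step N
  obtain ⟨v, hv, hv'⟩ := hzC'
  refine h1 w (shift_mem_free w.2 _) ?_
  have : (⟨shift 1 w.1, shift_mem_free w.2 _⟩ : {x : ℤ → Bool // x ∈ FreePart}) = v := by
    apply Subtype.ext
    change shift _ w.1 = v.1
    rw [hv', hw', shift_shift]
  rw [this]
  exact hv.trans hw.symm

lemma lower_bound (m : ℕ) (hm : 1 ≤ m) (A : Finset ℕ) (hA : ∀ a, 1 ≤ a → a ≤ m → a ∈ A)
    {k : ℕ} (c : {x : ℤ → Bool // x ∈ FreePart} → Fin k) (hc : IsBorelColoring A c) :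
    m + 2 ≤ k := by
  by_contra hk
  let sh : ℕ → {x : ℤ → Bool // x ∈ FreePart} → {x : ℤ → Bool // x ∈ FreePart} := fun n x =>
    ⟨shift (n : ℤ) x.1, shift_mem_free x.2 _⟩
  have hne : ∀ x (i j : ℕ), i < j → j ≤ i + m → c (sh i x) ≠ c (sh j x) := by
    intro x i j hij hj
    have := hc.2 (sh i x) (j - i) (hA _ (by omega) (by omega)) (shift_mem_free (sh i x).2 _)
    convert this using 2
    apply Subtype.ext
    change shift _ x.1 = shift _ (shift _ x.1)
    rw [shift_shift]; congr 1; omega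
  have hinj : ∀ x (b : ℕ), Function.Injective (fun i : Fin (m + 1) => c (sh (b + i) x)) := by
    intro x b i j h
    rcases lt_trichotomy i j with h' | h' | h'
    · exact absurd h (hne x _ _ (by omega) (by omega))
    · exact h'
    · exact absurd h.symm (hne x _ _ (by omega) (by omega))
  obtain ⟨x0⟩ : Nonempty {x : ℤ → Bool // x ∈ FreePart} := by
    obtain ⟨x, hx⟩ := (dense_of_mem_residual free_residual).nonempty
    exact ⟨⟨x, hx⟩⟩
  have hk1 : m + 1 ≤ k := by simpa using Fintype.card_le_of_injective _ (hinj x0 0)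
  obtain rfl : k = m + 1 := by omega
  refine no_periodic (m + 1) (by omega) c hc.1 ?_ ?_
  · intro x h
    have := hc.2 x 1 (hA 1 le_rfl hm) h
    exact this.symm
  · intro x h
    obtain ⟨i, hi⟩ := (Finite.injective_iff_surjective.1 (hinj x 1)) (c x)
    have e0 : sh 0 x = x := Subtype.ext (by
      change shift _ x.1 = _; simp [shift_zero'])
    by_cases him : i.1 = m
    · simp only [him] at hi
      have e : sh (m + 1) x = sh (1 + m) x := by rw [Nat.add_comm 1 m]
      exact (congrArg c e).trans hi
    · exfalso
      have := hne x 0 (1 + i) (by omega) (by omega)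
      rw [e0] at this
      exact this hi.symm

/-- For all `n ≥ 1` and `3 ≤ k ≤ n + 2`, there is a set
`{a₁ < ⋯ < aₙ}` of positive integers with `gcd(a₁,…,aₙ) = 1` and `χ(a₁,…,aₙ) = k`. -/
theorem exists_generating_set_with_given_borelChromatic
    (n k : ℕ) (hn : 1 ≤ n) (hk3 : 3 ≤ k) (hkn : k ≤ n + 2) :
    ∃ A : Finset ℕ, A.card = n ∧ (∀ a ∈ A, 0 < a) ∧ A.gcd id = 1 ∧
      borelChromatic A = k := by
  obtain ⟨m, rfl⟩ : ∃ m, k = m + 2 := ⟨k - 2, by omega⟩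
  have hm : 1 ≤ m := by omega
  have hinj : Function.Injective fun j : ℕ => 1 + (m + 1) * (j + 1) := by
    intro i j h
    simpa using h
  have hdis : Disjoint (Finset.Icc 1 m)
      ((Finset.range (n - m)).image fun j : ℕ => 1 + (m + 1) * (j + 1)) := by
    rw [Finset.disjoint_left]
    intro a ha hb
    obtain ⟨j, _, rfl⟩ := Finset.mem_image.1 hb
    have := (Finset.mem_Icc.1 ha).2
    nlinarith
  set A := Finset.Icc 1 m ∪ (Finset.range (n - m)).image fun j : ℕ => 1 + (m + 1) * (j + 1) with hA
  have hsub : ∀ a, 1 ≤ a → a ≤ m → a ∈ A := fun a h h' =>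
    Finset.mem_union_left _ (Finset.mem_Icc.2 ⟨h, h'⟩)
  have hnd : ∀ a ∈ A, ¬ (m + 1) ∣ a := by
    intro a ha hd
    rcases Finset.mem_union.1 ha with h | h
    · have h' := Finset.mem_Icc.1 h
      have := Nat.le_of_dvd h'.1 hd
      omega
    · obtain ⟨j, _, rfl⟩ := Finset.mem_image.1 h
      rw [Nat.dvd_add_left (Dvd.intro _ rfl)] at hd
      have := Nat.le_of_dvd one_pos hd
      omega
  refine ⟨A, ?_, ?_, ?_, ?_⟩
  · rw [hA, Finset.card_union_of_disjoint hdis, Finset.card_image_of_injective _ hinj]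
    simp
    omega
  · intro a ha
    rcases Nat.eq_zero_or_pos a with h | h
    · exact absurd (h ▸ dvd_zero _) (hnd a ha)
    · exact h
  · have : A.gcd id ∣ 1 := Finset.gcd_dvd (f := id) (hsub 1 le_rfl hm)
    exact Nat.dvd_one.1 this
  · have hmem : m + 2 ∈ {k : ℕ | ∃ c : {x : ℤ → Bool // x ∈ FreePart} → Fin k,
        IsBorelColoring A c} := exists_coloring (m + 1) (by omega) A hnd
    refine le_antisymm (Nat.sInf_le hmem) (le_csInf ⟨_, hmem⟩ ?_)
    rintro k ⟨c, hc⟩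
    exact lower_bound m hm A hsub c hc
end

section
/- Let 0 < a_1 < a_2 be integers with gcd(a_1, a_2) = 1. Then χ(a_1, a_2) = 4 if (a_1, a_2) = (1, 2), and χ(a_1, a_2) = 3 otherwise. -/
namespace BorelPair

abbrev F : Type := {x : ℤ → Bool // x ∈ FreePart}

theorem shift_shift (s t : ℤ) (x : ℤ → Bool) : shift s (shift t x) = shift (s + t) x := by
  funext n
  simp only [shift]
  congr 1
  ring

theorem shift_mem (s : ℤ) {x : ℤ → Bool} (hx : x ∈ FreePart) : shift s x ∈ FreePart := by
  intro t ht h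
  apply hx t ht
  have h2 := congrArg (shift (-s)) h
  rw [shift_shift, shift_shift, shift_shift] at h2
  have e1 : -s + t + s = t := by ring
  have e2 : -s + s = 0 := by ring
  rw [e1, e2] at h2
  rw [h2]
  funext n
  simp [shift]

/-- The shift on the free part. -/
def S (s : ℤ) (x : F) : F := ⟨shift s x.1, shift_mem s x.2⟩

theorem S_add (s t : ℤ) (x : F) : S s (S t x) = S (s + t) x :=
  Subtype.ext (shift_shift s t x.1)

theorem S_zero (x : F) : S 0 x = x := by
  apply Subtype.ext
  funext n
  simp [S, shift]

theorem S_ne (s : ℤ) (hs : s ≠ 0) (x : F) : S s x ≠ x := fun h =>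
  x.2 s hs (congrArg Subtype.val h)

theorem continuous_shift (s : ℤ) : Continuous (shift s : (ℤ → Bool) → (ℤ → Bool)) :=
  continuous_pi fun n => continuous_apply (n + s)

theorem continuous_S (s : ℤ) : Continuous (S s) :=
  ((continuous_shift s).comp continuous_subtype_val).subtype_mk _

theorem measurable_S (s : ℤ) : Measurable (S s) := (continuous_S s).measurable

/-! ### Lower bound -/

theorem open_window {U : Set (ℤ → Bool)} (hU : IsOpen U) {x : ℤ → Bool} (hx : x ∈ U) :
    ∃ K : ℕ, ∀ y : ℤ → Bool, (∀ i : ℤ, |i| ≤ K → y i = x i) → y ∈ U := by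
  obtain ⟨I, u, hu, hsub⟩ := isOpen_pi_iff.1 hU x hx
  refine ⟨I.sup Int.natAbs, fun y hy => hsub ?_⟩
  intro i hi
  have : i.natAbs ≤ I.sup Int.natAbs := Finset.le_sup (f := Int.natAbs) hi
  rw [hy i (by rw [Int.abs_eq_natAbs]; exact_mod_cast this)]
  exact (hu i hi).2

theorem isOpen_ne (s : ℤ) : IsOpen {x : ℤ → Bool | shift s x ≠ x} :=
  isOpen_ne_fun (continuous_shift s) continuous_id

theorem freePart_eq : FreePart = ⋂ s : {s : ℤ // s ≠ 0}, {x : ℤ → Bool | shift s.1 x ≠ x} := by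
  ext x
  simp [FreePart]

theorem measurableSet_freePart : MeasurableSet FreePart := by
  rw [freePart_eq]
  exact MeasurableSet.iInter fun s => (isOpen_ne s.1).measurableSet

theorem dense_ne (s : ℤ) (hs : s ≠ 0) : Dense {x : ℤ → Bool | shift s x ≠ x} := by
  rw [dense_iff_inter_open]
  rintro U hU ⟨x, hx⟩
  obtain ⟨K, hK⟩ := open_window hU hx
  -- modify at one far coordinate
  obtain ⟨p, hp1, hp2⟩ : ∃ p : ℤ, (K : ℤ) < |p| ∧ (K : ℤ) < |p + s| := by
    rcases lt_or_gt_of_ne hs with h | h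
    · exact ⟨-(K + 1), by rw [abs_neg, abs_of_nonneg] <;> omega,
        by rw [abs_of_neg] <;> omega⟩
    · exact ⟨K + 1, by rw [abs_of_nonneg] <;> omega,
        by rw [abs_of_nonneg] <;> omega⟩
  refine ⟨Function.update x (p + s) (!(x p)), hK _ fun i hi => ?_, ?_⟩
  · rw [Function.update_of_ne]
    rintro rfl
    omega
  · intro h
    have h2 := congrFun h p
    have hne : p ≠ p + s := by omega
    simp [shift, Function.update_of_ne hne] at h2

theorem freePart_residual : FreePart ∈ residual (ℤ → Bool) := by
  rw [freePart_eq]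
  exact countable_iInter_mem.mpr fun s =>
    residual_of_dense_open (isOpen_ne s.1) (dense_ne s.1 s.2)

def shiftHomeo (s : ℤ) : (ℤ → Bool) ≃ₜ (ℤ → Bool) where
  toFun := shift s
  invFun := shift (-s)
  left_inv x := by rw [shift_shift]; funext n; simp [shift]
  right_inv x := by rw [shift_shift]; funext n; simp [shift]
  continuous_toFun := continuous_shift s
  continuous_invFun := continuous_shift (-s)

open Topology in
theorem recur {k : ℕ} (c : F → Fin k) (hc : Measurable c) :
    ∃ N : ℕ, ∀ n : ℕ, N ≤ n → ∃ x : F, c x = c (S n x) := by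
  let A : Fin k → Set (ℤ → Bool) := fun i => Subtype.val '' (c ⁻¹' {i})
  have hA : ∀ i, MeasurableSet (A i) := fun i =>
    measurableSet_freePart.subtype_image (hc (measurableSet_singleton i))
  have hunion : FreePart ⊆ ⋃ i, A i := fun x hx =>
    Set.mem_iUnion.2 ⟨c ⟨x, hx⟩, ⟨x, hx⟩, rfl, rfl⟩
  obtain ⟨i, hi⟩ : ∃ i, ¬ IsMeagre (A i) := by
    by_contra! h
    exact not_isMeagre_of_mem_residual freePart_residual ((isMeagre_iUnion h).mono hunion)
  obtain ⟨U, hU, hAU⟩ := (hA i).residualEq_isOpen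
  have hne : U.Nonempty := by
    by_contra h
    rw [Set.not_nonempty_iff_eq_empty] at h
    subst h
    apply hi
    filter_upwards [hAU] with x hx hxA
    exact (hx.mp hxA : x ∈ (∅ : Set _))
  obtain ⟨u, hu⟩ := hne
  obtain ⟨K, hK⟩ := open_window hU hu
  refine ⟨2 * K + 1, fun n hn => ?_⟩
  have hAU' := (tendsto_residual_of_isOpenMap (shiftHomeo n).continuous
    (shiftHomeo n).isOpenMap).eventually hAU
  have hopen : IsOpen (U ∩ shift (n : ℤ) ⁻¹' U) := hU.inter (hU.preimage (continuous_shift _))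
  have hne2 : (U ∩ shift (n : ℤ) ⁻¹' U).Nonempty := by
    refine ⟨fun i => if |i| ≤ K then u i else u (i - n), hK _ fun i hi => if_pos hi,
      hK _ fun i hi => ?_⟩
    simp only [shift]
    rw [if_neg]
    · congr 1; ring
    · rw [abs_le] at hi ⊢
      omega
  obtain ⟨x, ⟨hx1, hx2⟩, hx3, hx4⟩ :=
    (dense_of_mem_residual (Filter.inter_mem hAU hAU')).inter_open_nonempty _ hopen hne2
  have y1 : x ∈ A i := hx3.mpr hx1
  have y2 : shift n x ∈ A i := hx4.mpr hx2
  obtain ⟨x1, e1, f1⟩ := y1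
  obtain ⟨x2, e2, f2⟩ := y2
  refine ⟨x1, ?_⟩
  have : S n x1 = x2 := Subtype.ext (by rw [f2, ← f1]; rfl)
  rw [this]
  exact Eq.trans e1 (Eq.symm e2)

/-! ### Markers -/

theorem exists_index (N : ℕ) : ∃ r : F → ℕ, Measurable r ∧
    ∀ x (i : ℤ), i ≠ 0 → |i| < N → r x ≠ r (S i x) := by
  classical
  obtain ⟨b, hbc, -, hb⟩ := TopologicalSpace.exists_countable_basis F
  obtain ⟨V, hV⟩ := (hbc.insert ∅).exists_eq_range (Set.insert_nonempty _ _)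
  have hVo : ∀ n, IsOpen (V n) := by
    intro n
    have : V n ∈ insert ∅ b := hV ▸ Set.mem_range_self n
    rcases this with h | h
    · rw [h]; exact isOpen_empty
    · exact hb.isOpen h
  let p : F → ℕ → Prop := fun x n => x ∈ V n ∧ ∀ i : ℤ, i ≠ 0 → |i| < N → S i x ∉ V n
  have hp : ∀ x, ∃ n, p x n := by
    intro x
    have hfin : ((fun i => S i x) '' {i : ℤ | i ≠ 0 ∧ |i| < N}).Finite := by
      apply Set.Finite.image
      apply (Set.finite_Icc (-(N : ℤ)) N).subset
      rintro i ⟨-, hi⟩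
      rw [abs_lt] at hi
      exact ⟨hi.1.le, hi.2.le⟩
    obtain ⟨v, hv, hxv, hsub⟩ := hb.exists_subset_of_mem_open
      (a := x) (u := ((fun i => S i x) '' {i : ℤ | i ≠ 0 ∧ |i| < N})ᶜ)
      (by
        rintro ⟨i, ⟨hi, -⟩, h⟩
        exact S_ne i hi x h)
      hfin.isClosed.isOpen_compl
    obtain ⟨n, rfl⟩ : v ∈ Set.range V := hV ▸ Set.mem_insert_of_mem _ hv
    exact ⟨n, hxv, fun i h1 h2 h3 => hsub h3 ⟨i, ⟨h1, h2⟩, rfl⟩⟩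
  refine ⟨fun x => Nat.find (hp x), measurable_find hp fun n => ?_, fun x i h0 hi h => ?_⟩
  · have : {x | p x n} = V n ∩ ⋂ i : ℤ, ⋂ (_ : i ≠ 0), ⋂ (_ : |i| < N), (S i ⁻¹' V n)ᶜ := by
      ext x; simp [p]
    rw [this]
    refine (hVo n).measurableSet.inter (MeasurableSet.iInter fun i => MeasurableSet.iInter fun _ =>
      MeasurableSet.iInter fun _ => ?_)
    exact (measurable_S i (hVo n).measurableSet).compl
  · have h1 := Nat.find_spec (hp x)
    have h2 := Nat.find_spec (hp (S i x))
    simp only at h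
    rw [← h] at h2
    exact h1.2 i h0 hi h2.1

theorem exists_markers (N : ℕ) : ∃ M : Set F, MeasurableSet M ∧
    (∀ x ∈ M, ∀ i : ℤ, i ≠ 0 → |i| < N → S i x ∉ M) ∧
    (∀ x, ∃ i : ℤ, |i| ≤ N ∧ S i x ∈ M) := by
  obtain ⟨r, hr, hrn⟩ := exists_index N
  have key : ∃ B : ℕ → Set F, ∀ n, B n = {x | r x = n ∧
      ∀ i : ℤ, i ≠ 0 → |i| < N → ∀ m, m < n → S i x ∉ B m} := by
    let B : ℕ → Set F := fun n => Nat.strongRec (motive := fun _ => Set F)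
      (fun n ih => {x | r x = n ∧
        ∀ i : ℤ, i ≠ 0 → |i| < N → ∀ m (h : m < n), S i x ∉ ih m h}) n
    refine ⟨B, fun n => ?_⟩
    simp only [B]
    rw [Nat.strongRec]
  obtain ⟨B, hB⟩ := key
  have hBm : ∀ n, MeasurableSet (B n) := by
    intro n
    induction n using Nat.strong_induction_on with
    | _ n ih =>
      have : B n = r ⁻¹' {n} ∩ ⋂ i : ℤ, ⋂ (_ : i ≠ 0), ⋂ (_ : |i| < N), ⋂ m, ⋂ (_ : m < n),
          (S i ⁻¹' B m)ᶜ := by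
        rw [hB n]; ext x; simp
      rw [this]
      refine (hr (measurableSet_singleton n)).inter (MeasurableSet.iInter fun i =>
        MeasurableSet.iInter fun _ => MeasurableSet.iInter fun _ => MeasurableSet.iInter fun m =>
        MeasurableSet.iInter fun hm => ?_)
      exact (measurable_S i (ih m hm)).compl
  have hmem : ∀ x n, x ∈ B n ↔ (r x = n ∧
      ∀ i : ℤ, i ≠ 0 → |i| < N → ∀ m, m < n → S i x ∉ B m) := by
    intro x n
    conv_lhs => rw [hB n]
    rfl
  refine ⟨⋃ n, B n, MeasurableSet.iUnion hBm, ?_, ?_⟩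
  · intro x hx i h0 hi hix
    obtain ⟨n, hn⟩ := Set.mem_iUnion.1 hx
    obtain ⟨m, hm⟩ := Set.mem_iUnion.1 hix
    obtain ⟨a1, b1⟩ := (hmem _ _).1 hn
    obtain ⟨a2, b2⟩ := (hmem _ _).1 hm
    have hne := hrn x i h0 hi
    rw [a1, a2] at hne
    rcases lt_or_gt_of_ne hne with h | h
    · apply b2 (-i) (by simpa using h0) (by rwa [abs_neg]) n h
      rw [S_add, neg_add_cancel, S_zero]
      exact hn
    · exact b1 i h0 hi m h hm
  · intro x
    by_cases hx : x ∈ B (r x)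
    · exact ⟨0, by simp, Set.mem_iUnion.2 ⟨r x, by rwa [S_zero]⟩⟩
    · rw [hmem] at hx
      push Not at hx
      obtain ⟨i, h0, hi, m, hm, h⟩ := hx rfl
      exact ⟨i, hi.le, Set.mem_iUnion.2 ⟨m, h⟩⟩

/-! ### Coloring from markers -/

theorem exists_phase (N : ℕ) (hN : 0 < N) (θ : ℝ) : ∃ φ : F → ℝ, Measurable φ ∧
    ∀ x, ∃ (z : ℤ) (e : ℝ), |e| ≤ 1 / N ∧ φ (S 1 x) = φ x + θ + e + z := by
  classical
  obtain ⟨M, hM, hdisc, hmax⟩ := exists_markers N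
  have hback : ∀ x, ∃ j : ℕ, S (-(j : ℤ)) x ∈ M := by
    intro x
    obtain ⟨i, hi, h⟩ := hmax (S (-(N : ℤ)) x)
    rw [S_add] at h
    rw [abs_le] at hi
    refine ⟨(N - i).toNat, ?_⟩
    have : (-(((N - i).toNat : ℕ) : ℤ)) = i + -(N : ℤ) := by omega
    rwa [this]
  have hfwd : ∀ x, ∃ l : ℕ, S ((l : ℤ) + 1) x ∈ M := by
    intro x
    obtain ⟨i, hi, h⟩ := hmax (S ((N : ℤ) + 1) x)
    rw [S_add] at h
    rw [abs_le] at hi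
    refine ⟨(N + i).toNat, ?_⟩
    have : ((((N + i).toNat : ℕ) : ℤ)) + 1 = i + ((N : ℤ) + 1) := by omega
    rwa [this]
  let j : F → ℕ := fun x => Nat.find (hback x)
  let l : F → ℕ := fun x => Nat.find (hfwd x)
  have hj : Measurable j := measurable_find hback fun n => measurable_S _ hM
  have hl : Measurable l := measurable_find hfwd fun n => measurable_S _ hM
  let g : ℕ → ℝ := fun L => (⌊θ * L⌋ : ℝ) / L
  let f : ℕ × ℕ → ℝ := fun p => p.1 * g (p.1 + p.2 + 1)
  refine ⟨fun x => f (j x, l x), (measurable_of_countable f).comp (hj.prodMk hl), fun x => ?_⟩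
  have jspec : S (-(j x : ℤ)) x ∈ M := Nat.find_spec (hback x)
  have lspec : S ((l x : ℤ) + 1) x ∈ M := Nat.find_spec (hfwd x)
  have hL : N ≤ j x + l x + 1 := by
    by_contra! hlt
    apply hdisc _ jspec ((j x : ℤ) + l x + 1) (by omega) (by rw [abs_of_nonneg] <;> omega)
    rw [S_add]
    convert lspec using 2
    ring
  set L := j x + l x + 1 with hLdef
  have hLpos : (0 : ℝ) < L := by
    have : 0 < L := by omega
    exact_mod_cast this
  have hNpos : (0 : ℝ) < N := by exact_mod_cast hN
  have hg : |g L - θ| ≤ 1 / N := by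
    have h1 := Int.floor_le (θ * L)
    have h2 := Int.lt_floor_add_one (θ * L)
    have h3 : g L - θ = (⌊θ * L⌋ - θ * L) / L := by
      simp only [g]; field_simp
    rw [h3, abs_div, abs_of_pos hLpos]
    have h4 : |(⌊θ * L⌋ : ℝ) - θ * L| ≤ 1 := by
      rw [abs_le]; constructor <;> linarith
    calc _ ≤ 1 / (L : ℝ) := by gcongr
      _ ≤ 1 / N := by
        apply one_div_le_one_div_of_le hNpos
        exact_mod_cast hL
  by_cases h1 : S 1 x ∈ M
  · have hl0 : l x = 0 := by
      simp only [l]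
      rw [Nat.find_eq_zero]
      simpa using h1
    have hj0 : j (S 1 x) = 0 := by
      simp only [j]
      rw [Nat.find_eq_zero]
      simpa [S_zero] using h1
    refine ⟨-⌊θ * L⌋, g L - θ, hg, ?_⟩
    have : (j x : ℝ) + 1 = L := by rw [hLdef, hl0]; push_cast; ring
    have h5 : (L : ℝ) * g L = ⌊θ * L⌋ := by simp only [g]; field_simp
    have h6 : f (j x, l x) = j x * g L := rfl
    have h7 : f (j (S 1 x), l (S 1 x)) = 0 := by simp [f, hj0]
    beta_reduce
    rw [h6, h7]
    push_cast
    rw [← h5, ← this]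
    ring
  · have hlpos : l x ≠ 0 := by
      intro h
      rw [h] at lspec
      exact h1 (by simpa using lspec)
    have hjs : j (S 1 x) = j x + 1 := by
      simp only [j]
      rw [Nat.find_eq_iff]
      constructor
      · rw [S_add]
        convert jspec using 2
        push_cast; ring
      · intro n hn h
        rw [S_add] at h
        rcases n with _ | n
        · exact h1 (by simpa using h)
        · have : -((n + 1 : ℕ) : ℤ) + 1 = -(n : ℤ) := by push_cast; ring
          rw [this] at h
          exact Nat.find_min (hback x) (by omega) h
    have hls : l (S 1 x) = l x - 1 := by
      simp only [l]
      rw [Nat.find_eq_iff]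
      constructor
      · rw [S_add]
        convert lspec using 2
        change ((l x - 1 : ℕ) : ℤ) + 1 + 1 = _
        omega
      · intro n hn h
        rw [S_add] at h
        have : (n : ℤ) + 1 + 1 = ((n + 1 : ℕ) : ℤ) + 1 := by push_cast; ring
        rw [this] at h
        exact Nat.find_min (hfwd x) (by omega) h
    refine ⟨0, g L - θ, hg, ?_⟩
    have h6 : f (j x, l x) = j x * g L := rfl
    have h7 : f (j (S 1 x), l (S 1 x)) = (j x + 1) * g L := by
      simp only [f, hjs, hls]
      have : j x + 1 + (l x - 1) + 1 = L := by omega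
      rw [this]; push_cast; ring
    beta_reduce
    rw [h6, h7]
    push_cast
    ring

theorem phase_iter {N : ℕ} {θ : ℝ} {φ : F → ℝ}
    (h : ∀ x, ∃ (z : ℤ) (e : ℝ), |e| ≤ 1 / N ∧ φ (S 1 x) = φ x + θ + e + z) (a : ℕ) (x : F) :
    ∃ (z : ℤ) (e : ℝ), |e| ≤ a / N ∧ φ (S a x) = φ x + a * θ + e + z := by
  induction a with
  | zero => exact ⟨0, 0, by simp, by simp [S_zero]⟩
  | succ a ih =>
    obtain ⟨z, e, he, hz⟩ := ih
    obtain ⟨z', e', he', hz'⟩ := h (S a x)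
    refine ⟨z + z', e + e', ?_, ?_⟩
    · calc |e + e'| ≤ |e| + |e'| := abs_add_le _ _
        _ ≤ a / N + 1 / N := add_le_add he he'
        _ = _ := by push_cast; ring
    · have : S ((a + 1 : ℕ) : ℤ) x = S 1 (S a x) := by
        rw [S_add]; congr 1; push_cast; ring
      rw [this, hz', hz]
      push_cast; ring

/-- Color of a phase: which of `k` arcs of length `1/k` of the circle contains it. -/
noncomputable def col (k : ℕ) [NeZero k] (y : ℝ) : Fin k :=
  ⟨(⌊k * y⌋ % (k : ℤ)).toNat, by
    have : (0 : ℤ) < k := by exact_mod_cast NeZero.pos k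
    have h1 := Int.emod_nonneg ⌊k * y⌋ this.ne'
    have h2 := Int.emod_lt_of_pos ⌊k * y⌋ this
    omega⟩

theorem col_measurable (k : ℕ) [NeZero k] : Measurable (col k) := by
  have h : Measurable (fun y : ℝ => ⌊(k : ℝ) * y⌋) := Int.measurable_floor.comp (measurable_const_mul _)
  let q : ℤ → Fin k := fun n => ⟨(n % (k : ℤ)).toNat, by
    have : (0 : ℤ) < k := by exact_mod_cast NeZero.pos k
    have h1 := Int.emod_nonneg n this.ne'
    have h2 := Int.emod_lt_of_pos n this
    omega⟩
  exact (measurable_of_countable q).comp h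

theorem col_eq {k : ℕ} [NeZero k] {y y' : ℝ} (h : col k y = col k y') :
    ∃ z : ℤ, k * |y' - y - z| < 1 := by
  have hk : (0 : ℤ) < k := by exact_mod_cast NeZero.pos k
  have hkr : (0 : ℝ) < k := by exact_mod_cast NeZero.pos k
  have h' : (⌊k * y⌋ % (k : ℤ)).toNat = (⌊k * y'⌋ % (k : ℤ)).toNat := congrArg Fin.val h
  have h1 := Int.emod_nonneg ⌊k * y⌋ hk.ne'
  have h2 := Int.emod_nonneg ⌊k * y'⌋ hk.ne'
  have h3 : ⌊k * y⌋ % (k : ℤ) = ⌊k * y'⌋ % (k : ℤ) := by omega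
  obtain ⟨z, hz⟩ := Int.ModEq.dvd h3
  refine ⟨z, ?_⟩
  rw [← abs_of_pos hkr, ← abs_mul]
  have hz' : (⌊k * y'⌋ : ℝ) - ⌊k * y⌋ = k * z := by exact_mod_cast hz
  have a1 := Int.floor_le (k * y)
  have a2 := Int.lt_floor_add_one (k * y)
  have a3 := Int.floor_le (k * y')
  have a4 := Int.lt_floor_add_one (k * y')
  rw [abs_lt]
  constructor <;> nlinarith

theorem far {k s t : ℕ} (hs : 0 < s) (ht : 2 * t ≤ s) (hkt : s < k * t) (z : ℤ) {d e : ℝ}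
    (hd : d = t / s ∨ d = -(t / s)) (he : |e| ≤ 1 / (k * s)) : 1 ≤ k * |d + e - z| := by
  have hk : 0 < k := Nat.pos_of_ne_zero (by rintro rfl; omega)
  have hkr : (0 : ℝ) < k := by exact_mod_cast hk
  have hsr : (0 : ℝ) < s := by exact_mod_cast hs
  have htz : ∀ w : ℤ, (t : ℝ) / s ≤ |(t : ℝ) / s - w| := by
    intro w
    have e1 : (t : ℝ) / s - w = ((t - s * w : ℤ) : ℝ) / s := by push_cast; field_simp
    rw [e1, abs_div, abs_of_pos hsr]
    gcongr
    rw [← Int.cast_abs]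
    have : (t : ℤ) ≤ |(t : ℤ) - s * w| := by
      rw [le_abs]
      rcases le_or_gt w 0 with h | h
      · left; nlinarith
      · right; nlinarith
    exact_mod_cast this
  have h1 : (t : ℝ) / s ≤ |d - z| := by
    rcases hd with rfl | rfl
    · exact htz z
    · have := htz (-z)
      rw [← abs_neg]
      convert this using 2
      push_cast; ring
  have h2 : |d - z| ≤ |d + e - z| + |e| := by
    calc |d - z| = |(d + e - z) - e| := by congr 1; ring
      _ ≤ _ := abs_sub _ _
  have h3 : (s : ℝ) + 1 ≤ k * t := by exact_mod_cast hkt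
  have h4 : (1 : ℝ) / k + 1 / (k * s) ≤ t / s := by
    rw [div_add_div _ _ hkr.ne' (by positivity), div_le_div_iff₀ (by positivity) hsr]
    nlinarith [mul_le_mul_of_nonneg_left h3 (by positivity : (0:ℝ) ≤ k * s)]
  have h5 : 1 / (k : ℝ) ≤ |d + e - z| := by linarith
  rw [div_le_iff₀ hkr] at h5
  linarith

theorem upper (a b k : ℕ) [NeZero k] (ha : 0 < a) (hab : a < b) (hg : Nat.gcd a b = 1)
    (hk : a + b < k * ((a + b) / 2)) :
    ∃ c : F → Fin k, IsBorelColoring {a, b} c := by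
  set s := a + b with hs
  set t := s / 2 with ht
  have hkpos : 0 < k := NeZero.pos k
  have hspos : 0 < s := by omega
  have hcop : Nat.Coprime a s := by
    rw [hs]; simpa [Nat.coprime_self_add_right] using hg
  obtain ⟨m, w, hm⟩ : ∃ m w : ℤ, a * m = t + s * w := by
    have := Nat.gcd_eq_gcd_ab a s
    rw [hcop] at this
    refine ⟨Nat.gcdA a s * t, -(Nat.gcdB a s * t), ?_⟩
    push_cast at this
    linear_combination (-(t : ℤ)) * this
  let N := b * k * s
  have hb : 0 < b := by omega
  have hN : 0 < N := Nat.mul_pos (Nat.mul_pos hb hkpos) hspos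
  let θ : ℝ := m / s
  obtain ⟨φ, hφ, hstep⟩ := exists_phase N hN θ
  have hsr : (0 : ℝ) < s := by exact_mod_cast hspos
  have hkr : (0 : ℝ) < k := by exact_mod_cast hkpos
  have hbr : (0 : ℝ) < b := by exact_mod_cast (by omega : 0 < b)
  have hmr : (a : ℝ) * m = t + s * w := by exact_mod_cast hm
  have haθ : (a : ℝ) * θ = t / s + w := by
    simp only [θ]; field_simp; linarith
  have hbθ : (b : ℝ) * θ = -(t / s) + (m - w : ℤ) := by
    have : (s : ℝ) = a + b := by rw [hs]; push_cast; ring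
    have h2 : (s : ℝ) * θ = m := by simp only [θ]; field_simp
    rw [this, add_mul, haθ] at h2
    push_cast
    linarith
  have main : ∀ (n : ℕ) (d : ℝ) (v : ℤ), n ≤ b → (d = t / s ∨ d = -(t / s)) →
      (n : ℝ) * θ = d + v → ∀ x, col k (φ x) ≠ col k (φ (S n x)) := by
    intro n d v hn hd hv x h
    obtain ⟨z, hz⟩ := col_eq h
    obtain ⟨z', e, he, hz'⟩ := phase_iter hstep n x
    have he' : |e| ≤ 1 / (k * s) := by
      refine he.trans ?_
      have hnr : (n : ℝ) ≤ b := by exact_mod_cast hn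
      have : (N : ℝ) = b * (k * s) := by simp only [N]; push_cast; ring
      rw [this, div_le_div_iff₀ (by positivity) (by positivity)]
      have : (0 : ℝ) < k * s := by positivity
      nlinarith
    have := far hspos (by omega) hk (z - v - z') hd he'
    rw [hz', hv] at hz
    have e1 : φ x + (d + v) + e + z' - φ x - z = d + e - (z - v - z' : ℤ) := by
      push_cast; ring
    rw [e1] at hz
    linarith
  refine ⟨fun x => col k (φ x), (col_measurable k).comp hφ, ?_⟩
  intro x n hn hmem
  simp only [Finset.mem_insert, Finset.mem_singleton] at hn
  rcases hn with rfl | rfl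
  · exact main _ _ w hab.le (Or.inl rfl) haθ x
  · exact main _ _ (m - w) le_rfl (Or.inr rfl) hbθ x

theorem lower_two (a b k : ℕ) (c : F → Fin k) (hc : IsBorelColoring {a, b} c) : 3 ≤ k := by
  by_contra! hk
  obtain ⟨N, hN⟩ := recur c hc.1
  have h1 : ∀ x, c x ≠ c (S a x) := fun x => hc.2 x a (by simp) _
  have h2 : ∀ n : ℕ, ∀ x, c (S ((2 * n * a : ℕ) : ℤ) x) = c x := by
    intro n
    induction n with
    | zero => intro x; simp [S_zero]
    | succ n ih =>
      intro x
      have e : S ((2 * (n + 1) * a : ℕ) : ℤ) x = S a (S a (S ((2 * n * a : ℕ) : ℤ) x)) := by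
        rw [S_add, S_add]; congr 1; push_cast; ring
      rw [e, ← ih x]
      have u1 := h1 (S ((2 * n * a : ℕ) : ℤ) x)
      have u2 := h1 (S a (S ((2 * n * a : ℕ) : ℤ) x))
      omega
  rcases Nat.eq_zero_or_pos a with rfl | ha
  · obtain ⟨x, -⟩ := hN N le_rfl
    exact h1 x (by simp [S_zero])
  obtain ⟨x, hx⟩ := hN (2 * N * a + a) (by nlinarith)
  have e : S ((2 * N * a + a : ℕ) : ℤ) x = S a (S ((2 * N * a : ℕ) : ℤ) x) := by
    rw [S_add]; congr 1; push_cast; ring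
  rw [e] at hx
  apply h1 (S ((2 * N * a : ℕ) : ℤ) x)
  rw [← hx, h2]

theorem lower_three (k : ℕ) (c : F → Fin k) (hc : IsBorelColoring {1, 2} c) : 4 ≤ k := by
  by_contra! hk
  obtain ⟨N, hN⟩ := recur c hc.1
  have h1 : ∀ x, c x ≠ c (S 1 x) := fun x => hc.2 x 1 (by simp) _
  have h2 : ∀ x, c x ≠ c (S 2 x) := fun x => hc.2 x 2 (by simp) _
  have h3 : ∀ n : ℕ, ∀ x, c (S ((3 * n : ℕ) : ℤ) x) = c x := by
    intro n
    induction n with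
    | zero => intro x; simp [S_zero]
    | succ n ih =>
      intro x
      have e : S ((3 * (n + 1) : ℕ) : ℤ) x = S 3 (S ((3 * n : ℕ) : ℤ) x) := by
        rw [S_add]; congr 1; push_cast; ring
      rw [e, ← ih x]
      generalize S ((3 * n : ℕ) : ℤ) x = y
      have u1 := h1 y
      have u2 := h2 y
      have u3 := h1 (S 1 y)
      have u4 := h2 (S 1 y)
      have u5 := h1 (S 2 y)
      rw [S_add] at u3 u4 u5
      norm_num at u3 u4 u5
      omega
  obtain ⟨x, hx⟩ := hN (3 * N + 1) (by omega)
  have e : S ((3 * N + 1 : ℕ) : ℤ) x = S 1 (S ((3 * N : ℕ) : ℤ) x) := by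
    rw [S_add]; congr 1; push_cast; ring
  rw [e] at hx
  apply h1 (S ((3 * N : ℕ) : ℤ) x)
  rw [← hx, h3]

end BorelPair

open Classical in
/-- For `0 < a₁ < a₂` with `gcd(a₁,a₂) = 1`, `χ(a₁,a₂) = 4` if
`(a₁,a₂) = (1,2)`, and `χ(a₁,a₂) = 3` otherwise. -/
theorem borelChromatic_pair (a₁ a₂ : ℕ) (h1 : 0 < a₁) (h2 : a₁ < a₂)
    (hgcd : Nat.gcd a₁ a₂ = 1) :
    borelChromatic {a₁, a₂} = if a₁ = 1 ∧ a₂ = 2 then 4 else 3 := by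
  unfold borelChromatic
  split_ifs with h
  · obtain ⟨rfl, rfl⟩ := h
    apply le_antisymm
    · exact Nat.sInf_le (BorelPair.upper 1 2 4 (by norm_num) (by norm_num) hgcd (by norm_num))
    · apply le_csInf ⟨4, BorelPair.upper 1 2 4 (by norm_num) (by norm_num) hgcd (by norm_num)⟩
      rintro k ⟨c, hc⟩
      exact BorelPair.lower_three k c hc
  · have hup := BorelPair.upper a₁ a₂ 3 h1 h2 hgcd (by omega)
    apply le_antisymm
    · exact Nat.sInf_le hup
    · apply le_csInf ⟨3, hup⟩
      rintro k ⟨c, hc⟩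
      exact BorelPair.lower_two a₁ a₂ k c hc
end
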